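/- Let Γ be a thick generalised hexagon, and let x1, x2, x3 be a round-up triple of points of Γ such that x1 and x2 are special; let c = [x1,x2] be their unique common collinear point. Then for every point y of Γ that is opposite c and special to both x1 and x2, each of x1, x2 and x3 is collinear to c and special to y. -/

import Mathlib

/-- An incidence structure of points and lines, each line being a set of points. -/
structure GenHexagon where
  Point : Type
  Line : Type
  pts : Line → Set Point

namespace GenHexagon

variable (Γ : GenHexagon)

/-- Adjacency of the bipartite incidence graph on the disjoint union of points and lines:
a point is adjacent to a line iff the point lies on the line. -/
def incAdj : Γ.Point ⊕ Γ.Line → Γ.Point ⊕ Γ.Line → Prop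
  | Sum.inl x, Sum.inr L => x ∈ Γ.pts L
  | Sum.inr L, Sum.inl x => x ∈ Γ.pts L
  | _, _ => False

/-- The bipartite incidence graph. -/
def incGraph : SimpleGraph (Γ.Point ⊕ Γ.Line) where
  Adj := Γ.incAdj
  symm := ⟨by rintro (x | L) (y | M) h <;> simp_all [incAdj]⟩
  loopless := ⟨by rintro (x | L) h <;> simp_all [incAdj]⟩

/-- `Γ` is a generalised hexagon: its incidence graph has diameter `6` and girth `12`. -/
def IsGenHexagon : Prop :=
  Γ.incGraph.ediam = 6 ∧ Γ.incGraph.egirth = 12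

/-- Two points are collinear if they are distinct and some line contains both. -/
def Collinear (x y : Γ.Point) : Prop :=
  x ≠ y ∧ ∃ L, x ∈ Γ.pts L ∧ y ∈ Γ.pts L

/-- Two points are special if they are distinct, non-collinear, and collinear
to a common point. -/
def Special (x y : Γ.Point) : Prop :=
  x ≠ y ∧ ¬ Γ.Collinear x y ∧ ∃ z, Γ.Collinear x z ∧ Γ.Collinear y z

/-- Two points are opposite if they are distinct, non-collinear and non-special. -/
def Opposite (x y : Γ.Point) : Prop :=
  x ≠ y ∧ ¬ Γ.Collinear x y ∧ ¬ Γ.Special x y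

/-- `Γ` has order `(s, t)`: every line contains exactly `s + 1` points and every
point lies on exactly `t + 1` lines. -/
def HasOrder (s t : ℕ) : Prop :=
  (∀ L, (Γ.pts L).encard = s + 1) ∧ (∀ x, {L | x ∈ Γ.pts L}.encard = t + 1)

/-- `Γ` is thick: every line contains at least `3` points and every point lies on
at least `3` lines. -/
def Thick : Prop :=
  (∀ L, 3 ≤ (Γ.pts L).encard) ∧ (∀ x, 3 ≤ {L | x ∈ Γ.pts L}.encard)

/-- A point is close to a line if it is collinear to exactly one point of that line. -/
def CloseTo (x : Γ.Point) (L : Γ.Line) : Prop :=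
  ∃! y, y ∈ Γ.pts L ∧ Γ.Collinear x y

/-- Two lines are opposite if they are disjoint and no point of one is collinear to
a point of the other. -/
def OppLines (L M : Γ.Line) : Prop :=
  (∀ x ∈ Γ.pts L, x ∉ Γ.pts M) ∧
  (∀ x ∈ Γ.pts L, ∀ y ∈ Γ.pts M, ¬ Γ.Collinear x y)

/-- The distance-3 trace `[L,M]₃` of two (opposite) lines: the set of points close to
both `L` and `M`. -/
def trace3 (L M : Γ.Line) : Set Γ.Point :=
  {x | Γ.CloseTo x L ∧ Γ.CloseTo x M}

/-- The distance-3 trace `[L,M]₃` is regular if `[N,M]₃ = [L,M]₃` for every line `N`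
opposite `M` such that `[N,M]₃` and `[L,M]₃` share at least two points. -/
def RegularTrace3 (L M : Γ.Line) : Prop :=
  ∀ N, Γ.OppLines N M → (Γ.trace3 N M ∩ Γ.trace3 L M).Nontrivial →
    Γ.trace3 N M = Γ.trace3 L M

/-- A hyperbolic line: a set `H` of pairwise special points, all collinear to a common
point `p`, such that for every point `q` opposite `p` to which at least two points of `H`
are special, the set of points special to `q` and collinear to `p` equals `H`. -/
def IsHyperbolicLine (H : Set Γ.Point) : Prop :=
  (∀ x ∈ H, ∀ y ∈ H, x ≠ y → Γ.Special x y) ∧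
  ∃ p, (∀ x ∈ H, Γ.Collinear x p) ∧
    ∀ q, Γ.Opposite q p → {x ∈ H | Γ.Special q x}.Nontrivial →
      {x | Γ.Special q x ∧ Γ.Collinear x p} = H

/-- A round-up triple: no point of `Γ` is opposite exactly one of `x₁, x₂, x₃`. -/
def RoundUpTriple (x₁ x₂ x₃ : Γ.Point) : Prop :=
  ∀ y : Γ.Point,
    ¬ ((Γ.Opposite y x₁ ∧ ¬ Γ.Opposite y x₂ ∧ ¬ Γ.Opposite y x₃) ∨
       (¬ Γ.Opposite y x₁ ∧ Γ.Opposite y x₂ ∧ ¬ Γ.Opposite y x₃) ∨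
       (¬ Γ.Opposite y x₁ ∧ ¬ Γ.Opposite y x₂ ∧ Γ.Opposite y x₃))

/-- A geometric line: a set `T` of points such that each point of `Γ` is either opposite
no member of `T`, or non-opposite to exactly one member of `T`. -/
def IsGeometricLine (T : Set Γ.Point) : Prop :=
  ∀ y : Γ.Point, (∀ x ∈ T, ¬ Γ.Opposite y x) ∨ (∃! x, x ∈ T ∧ ¬ Γ.Opposite y x)

end GenHexagon

/-!
In a graph of girth `g`, a path of length at most `g / 2` is a geodesic, since a shorter walk
between its ends would close up to a cycle of length less than `g`. In the incidence graph of a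
generalised hexagon this says that a path `z, N, c, L, m, M, x` realises the maximal distance `6`,
so that `z` is opposite `x`.

Let `x₁` and `x₂` be collinear to `c`. No point equal or collinear to `c` is opposite `x₁` or `x₂`,
so by the round-up property none is opposite `x₃`. Taking `c` itself, `x₃` is not opposite `c`; and
were `x₃` special to `c`, with midpoint `m`, then any other point `z` of a line through `c` that
avoids `m` would be opposite `x₃`. Hence `x₃` is equal or collinear to `c`. Finally `y` is opposite
`c` but not `x₃`, so `x₃ ≠ c` and `y` is special to `x₃`.
-/

section

variable {V : Type*} {G : SimpleGraph V} {u v : V} {p q : G.Walk u v}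

theorem isPath_eq_of_length_add_length_lt_egirth (hp : p.IsPath) (hq : q.IsPath)
    (hlt : ((p.length + q.length : ℕ) : ℕ∞) < G.egirth) : p = q := by
  by_contra hne
  obtain ⟨w, -, -, cycle, hcycle, hle⟩ := hp.exists_isCycle_length_le_add_of_ne hq hne
  have hge : G.egirth ≤ (p.length + q.length : ℕ) :=
    (SimpleGraph.egirth_le_length hcycle).trans (mod_cast hle)
  exact hge.not_gt hlt

theorem isPath_length_eq_dist_of_two_mul_length_le_egirth (hp : p.IsPath)
    (hle : ((2 * p.length : ℕ) : ℕ∞) ≤ G.egirth) : p.length = G.dist u v := by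
  obtain ⟨q, hq, hdist⟩ := p.reachable.exists_path_of_dist
  by_contra hne
  have hlt : p.length + q.length < 2 * p.length := by
    have := SimpleGraph.dist_le p
    lia
  have hpq : p = q :=
    isPath_eq_of_length_add_length_lt_egirth hp hq (lt_of_lt_of_le (mod_cast hlt) hle)
  exact hne (hpq ▸ hdist)

end

namespace GenHexagon

variable {Γ : GenHexagon} {c m x y z x₁ x₂ x₃ : Γ.Point} {L M N : Γ.Line}

theorem incGraph_adj_inl_inr (h : x ∈ Γ.pts L) : Γ.incGraph.Adj (.inl x) (.inr L) := h

theorem incGraph_adj_inr_inl (h : x ∈ Γ.pts L) : Γ.incGraph.Adj (.inr L) (.inl x) := h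

theorem Thick.pts_nontrivial (h : Γ.Thick) (L : Γ.Line) : (Γ.pts L).Nontrivial :=
  Set.one_lt_encard_iff_nontrivial.1 ((h.1 L).trans_lt' (by norm_num))

theorem Thick.lines_nontrivial (h : Γ.Thick) (x : Γ.Point) : {L | x ∈ Γ.pts L}.Nontrivial :=
  Set.one_lt_encard_iff_nontrivial.1 ((h.2 x).trans_lt' (by norm_num))

theorem Collinear.symm (h : Γ.Collinear x y) : Γ.Collinear y x :=
  ⟨h.1.symm, h.2.imp fun _ => And.symm⟩

theorem Collinear.not_opposite (h : Γ.Collinear x y) : ¬ Γ.Opposite x y :=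
  fun hxy => hxy.2.1 h

theorem not_opposite_of_collinear_of_collinear (hx : Γ.Collinear x z) (hy : Γ.Collinear y z) :
    ¬ Γ.Opposite x y :=
  fun hxy => hxy.2.2 ⟨hxy.1, hxy.2.1, z, hx, hy⟩

theorem Opposite.special_of_collinear (hyc : Γ.Opposite y c) (hxc : Γ.Collinear x c)
    (hyx : ¬ Γ.Opposite y x) : Γ.Special y x := by
  have hne : y ≠ x := by
    rintro rfl
    exact hyc.2.1 hxc
  have hncol : ¬ Γ.Collinear y x := fun h =>
    not_opposite_of_collinear_of_collinear h hxc.symm hyc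
  by_contra hnsp
  exact hyx ⟨hne, hncol, hnsp⟩

theorem Collinear.exists_walk_length_eq_two (h : Γ.Collinear x y) :
    ∃ p : Γ.incGraph.Walk (.inl x) (.inl y), p.length = 2 := by
  obtain ⟨-, L, hx, hy⟩ := h
  exact ⟨.cons (incGraph_adj_inl_inr hx) (incGraph_adj_inr_inl hy).toWalk, rfl⟩

theorem opposite_of_four_lt_dist (h : 4 < Γ.incGraph.dist (.inl x) (.inl y)) :
    Γ.Opposite x y := by
  refine ⟨?_, fun hxy => ?_, fun ⟨_, _, z, hxz, hyz⟩ => ?_⟩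
  · rintro rfl
    simp at h
  · obtain ⟨p, hp⟩ := hxy.exists_walk_length_eq_two
    have := SimpleGraph.dist_le p
    lia
  · obtain ⟨p, hp⟩ := hxz.exists_walk_length_eq_two
    obtain ⟨q, hq⟩ := hyz.symm.exists_walk_length_eq_two
    have := SimpleGraph.dist_le (p.append q)
    rw [SimpleGraph.Walk.length_append] at this
    lia

theorem line_eq_of_mem_of_mem (hgirth : 4 < Γ.incGraph.egirth) (hxy : x ≠ y)
    (hxL : x ∈ Γ.pts L) (hyL : y ∈ Γ.pts L) (hxM : x ∈ Γ.pts M) (hyM : y ∈ Γ.pts M) : L = M := by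
  let p : Γ.incGraph.Walk (.inl x) (.inl y) :=
    .cons (incGraph_adj_inl_inr hxL) (incGraph_adj_inr_inl hyL).toWalk
  let q : Γ.incGraph.Walk (.inl x) (.inl y) :=
    .cons (incGraph_adj_inl_inr hxM) (incGraph_adj_inr_inl hyM).toWalk
  have hp : p.IsPath := by simp [p, hxy]
  have hq : q.IsPath := by simp [q, hxy]
  have hpq : p = q := isPath_eq_of_length_add_length_lt_egirth hp hq (by simpa [p, q] using hgirth)
  simpa [p, q] using congrArg SimpleGraph.Walk.support hpq

theorem exists_line_mem_notMem (hgirth : 4 < Γ.incGraph.egirth)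
    (hlines : {L | c ∈ Γ.pts L}.Nontrivial) (hcm : c ≠ m) :
    ∃ N, c ∈ Γ.pts N ∧ m ∉ Γ.pts N := by
  obtain ⟨L, hcL, M, hcM, hLM⟩ := hlines
  by_contra! h
  exact hLM (line_eq_of_mem_of_mem hgirth hcm hcL (h L hcL) hcM (h M hcM))

theorem Special.opposite_of_mem_of_notMem (hgirth : 12 ≤ Γ.incGraph.egirth) (hcx : Γ.Special c x)
    (hcm : Γ.Collinear c m) (hxm : Γ.Collinear x m) (hcN : c ∈ Γ.pts N) (hmN : m ∉ Γ.pts N)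
    (hzN : z ∈ Γ.pts N) (hzc : z ≠ c) : Γ.Opposite z x := by
  obtain ⟨hcx_ne, hcx_ncol, -⟩ := hcx
  obtain ⟨hcm_ne, L, hcL, hmL⟩ := hcm
  obtain ⟨hxm_ne, M, hxM, hmM⟩ := hxm
  have notMem_or_notMem (K : Γ.Line) : c ∉ Γ.pts K ∨ x ∉ Γ.pts K := by
    by_contra! h
    exact hcx_ncol ⟨hcx_ne, K, h⟩
  let p : Γ.incGraph.Walk (.inl z) (.inl x) :=
    .cons (incGraph_adj_inl_inr hzN) <| .cons (incGraph_adj_inr_inl hcN) <|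
      .cons (incGraph_adj_inl_inr hcL) <| .cons (incGraph_adj_inr_inl hmL) <|
        .cons (incGraph_adj_inl_inr hmM) (incGraph_adj_inr_inl hxM).toWalk
  have hp : p.IsPath := by
    have hzm : z ≠ m := by grind
    have hzx : z ≠ x := by grind
    have hNL : N ≠ L := by grind
    have hNM : N ≠ M := by grind
    have hLM : L ≠ M := by grind
    simp [p, SimpleGraph.Walk.cons_isPath_iff, *, hxm_ne.symm]
  have hdist : 6 = Γ.incGraph.dist (.inl z) (.inl x) :=
    isPath_length_eq_dist_of_two_mul_length_le_egirth hp (by simpa [p] using hgirth)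
  exact opposite_of_four_lt_dist (by lia)

theorem Special.exists_collinear_opposite (hgirth : 12 ≤ Γ.incGraph.egirth)
    (hpts : ∀ L, (Γ.pts L).Nontrivial) (hlines : {L | c ∈ Γ.pts L}.Nontrivial)
    (hcx : Γ.Special c x) : ∃ z, Γ.Collinear z c ∧ Γ.Opposite z x := by
  have ⟨_, _, m, hcm, hxm⟩ := hcx
  obtain ⟨N, hcN, hmN⟩ := exists_line_mem_notMem (hgirth.trans_lt' (by norm_num)) hlines hcm.1
  obtain ⟨z, hzN, hzc⟩ := (hpts N).exists_ne c
  exact ⟨z, ⟨hzc, N, hzN, hcN⟩, hcx.opposite_of_mem_of_notMem hgirth hcm hxm hcN hmN hzN hzc⟩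

theorem RoundUpTriple.not_opposite (h : Γ.RoundUpTriple x₁ x₂ x₃) (h₁ : ¬ Γ.Opposite y x₁)
    (h₂ : ¬ Γ.Opposite y x₂) : ¬ Γ.Opposite y x₃ :=
  fun h₃ => h y (.inr (.inr ⟨h₁, h₂, h₃⟩))

theorem RoundUpTriple.eq_or_collinear (hgirth : 12 ≤ Γ.incGraph.egirth)
    (hpts : ∀ L, (Γ.pts L).Nontrivial) (hlines : {L | c ∈ Γ.pts L}.Nontrivial)
    (hrut : Γ.RoundUpTriple x₁ x₂ x₃) (hc₁ : Γ.Collinear x₁ c) (hc₂ : Γ.Collinear x₂ c) :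
    x₃ = c ∨ Γ.Collinear x₃ c := by
  have hopp : ¬ Γ.Opposite c x₃ := hrut.not_opposite hc₁.symm.not_opposite hc₂.symm.not_opposite
  have hsp : ¬ Γ.Special c x₃ := fun h => by
    obtain ⟨z, hzc, hz₃⟩ := h.exists_collinear_opposite hgirth hpts hlines
    exact hrut.not_opposite (not_opposite_of_collinear_of_collinear hzc hc₁)
      (not_opposite_of_collinear_of_collinear hzc hc₂) hz₃
  by_contra! ⟨hne, hncol⟩
  exact hopp ⟨hne.symm, fun h => hncol h.symm, hsp⟩

end GenHexagon

theorem roundUpTriple_special_general {Γ : GenHexagon} {x₁ x₂ x₃ c y : Γ.Point}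
    (hgirth : 12 ≤ Γ.incGraph.egirth) (hpts : ∀ L, (Γ.pts L).Nontrivial)
    (hlines : {L | c ∈ Γ.pts L}.Nontrivial) (hrut : Γ.RoundUpTriple x₁ x₂ x₃)
    (hc₁ : Γ.Collinear x₁ c) (hc₂ : Γ.Collinear x₂ c) (hyc : Γ.Opposite y c)
    (hy₁ : Γ.Special y x₁) (hy₂ : Γ.Special y x₂) : Γ.Collinear x₃ c ∧ Γ.Special y x₃ := by
  have hy₃ : ¬ Γ.Opposite y x₃ := hrut.not_opposite (fun h => h.2.2 hy₁) (fun h => h.2.2 hy₂)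
  have hc₃ : Γ.Collinear x₃ c :=
    (hrut.eq_or_collinear hgirth hpts hlines hc₁ hc₂).resolve_left fun h => hy₃ (h ▸ hyc)
  exact ⟨hc₃, hyc.special_of_collinear hc₃ hy₃⟩

/-- A round-up triple of points of a thick generalised hexagon with `x₁` and `x₂`
special, with common collinear point `c`: for every point `y` opposite `c` and special
to both `x₁` and `x₂`, each of `x₁, x₂, x₃` is collinear to `c` and special to `y`. -/
theorem roundUpTriple_special (Γ : GenHexagon) (hΓ : Γ.IsGenHexagon) (hth : Γ.Thick)
    (x₁ x₂ x₃ : Γ.Point) (hrut : Γ.RoundUpTriple x₁ x₂ x₃)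
    (hsp : Γ.Special x₁ x₂)
    (c : Γ.Point) (hc₁ : Γ.Collinear x₁ c) (hc₂ : Γ.Collinear x₂ c) :
    ∀ y : Γ.Point, Γ.Opposite y c → Γ.Special y x₁ → Γ.Special y x₂ →
      (Γ.Collinear x₁ c ∧ Γ.Special y x₁) ∧
      (Γ.Collinear x₂ c ∧ Γ.Special y x₂) ∧
      (Γ.Collinear x₃ c ∧ Γ.Special y x₃) := by
  intro y hyc hy₁ hy₂
  exact ⟨⟨hc₁, hy₁⟩, ⟨hc₂, hy₂⟩, roundUpTriple_special_general hΓ.2.ge hth.pts_nontrivial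
    (hth.lines_nontrivial c) hrut hc₁ hc₂ hyc hy₁ hy₂⟩
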